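/- arXiv:0804.2797 — 2 statements merged into one kernel-verified Lean document; each statement's English description precedes it below -/
import Mathlib

section
/- For the 4-dimensional Lie algebra with basis X₁,…,X₄ and brackets [X₁,X₃]=λ₂X₂+λ₄X₄, [X₂,X₄]=λ₁X₁+λ₃X₃, [X₂,X₃]=−λ₂X₁−λ₃X₄, [X₃,X₄]=−λ₄X₁+λ₃X₂, [X₄,X₁]=λ₁X₂+λ₄X₃, [X₂,X₁]=−λ₂X₃+λ₁X₄, the Jacobi identity holds for all λ₁,λ₂,λ₃,λ₄ ∈ ℝ, so this defines a 4-parametric family of Lie algebras. -/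
noncomputable section

/-- The standard basis of `ℝ⁴`. -/
def e (i : Fin 4) : Fin 4 → ℝ := Pi.single i 1

/-- The almost complex structure: `J e₀ = e₂, J e₁ = e₃, J e₂ = −e₀, J e₃ = −e₁`. -/
def Jm (x : Fin 4 → ℝ) : Fin 4 → ℝ := ![-(x 2), -(x 3), x 0, x 1]

/-- The Norden metric `g = diag(1,1,−1,−1)`. -/
def gm (x y : Fin 4 → ℝ) : ℝ := x 0 * y 0 + x 1 * y 1 - x 2 * y 2 - x 3 * y 3

/-- The associated Norden metric `g̃(x,y) = g(x,Jy)`. -/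
def gt (x y : Fin 4 → ℝ) : ℝ := gm x (Jm y)

/-- The Lie bracket of the 4-parametric family of Lie algebras:
`[X₁,X₃]=λ₂X₂+λ₄X₄`, `[X₂,X₄]=λ₁X₁+λ₃X₃`, `[X₂,X₃]=−λ₂X₁−λ₃X₄`,
`[X₃,X₄]=−λ₄X₁+λ₃X₂`, `[X₄,X₁]=λ₁X₂+λ₄X₃`, `[X₂,X₁]=−λ₂X₃+λ₁X₄`
(indices shifted down by one), extended bilinearly and skew-symmetrically. -/
def br (l1 l2 l3 l4 : ℝ) (x y : Fin 4 → ℝ) : Fin 4 → ℝ :=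
  ![ -l2*(x 1*y 2 - x 2*y 1) + l1*(x 1*y 3 - x 3*y 1) - l4*(x 2*y 3 - x 3*y 2),
      l2*(x 0*y 2 - x 2*y 0) - l1*(x 0*y 3 - x 3*y 0) + l3*(x 2*y 3 - x 3*y 2),
      l2*(x 0*y 1 - x 1*y 0) - l4*(x 0*y 3 - x 3*y 0) + l3*(x 1*y 3 - x 3*y 1),
     -l1*(x 0*y 1 - x 1*y 0) + l4*(x 0*y 2 - x 2*y 0) - l3*(x 1*y 2 - x 2*y 1) ]

/-- The Levi-Civita connection of `g`: `∇_x y = ½[x,y]`. -/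
def nab (l1 l2 l3 l4 : ℝ) (x y : Fin 4 → ℝ) : Fin 4 → ℝ :=
  ((1 : ℝ)/2) • br l1 l2 l3 l4 x y

/-- The Levi-Civita connection of `g̃`:
`∇̃_x y = ½{[x,y] + J[x,Jy] − J[Jx,y]}`. -/
def nabt (l1 l2 l3 l4 : ℝ) (x y : Fin 4 → ℝ) : Fin 4 → ℝ :=
  ((1 : ℝ)/2) • (br l1 l2 l3 l4 x y + Jm (br l1 l2 l3 l4 x (Jm y))
      - Jm (br l1 l2 l3 l4 (Jm x) y))

/-- The matrix of `g` in the standard basis. -/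
def G : Matrix (Fin 4) (Fin 4) ℝ := fun i j => gm (e i) (e j)

/-- The matrix of `g̃` in the standard basis. -/
def Gt : Matrix (Fin 4) (Fin 4) ℝ := fun i j => gt (e i) (e j)

/-- The Jacobi identity holds for the bracket of the 4-parametric family, for all
values of the parameters, so it defines a 4-parametric family of Lie algebras. -/
theorem stmt_11 (l1 l2 l3 l4 : ℝ) (x y z : Fin 4 → ℝ) :
    br l1 l2 l3 l4 x (br l1 l2 l3 l4 y z) + br l1 l2 l3 l4 y (br l1 l2 l3 l4 z x)
      + br l1 l2 l3 l4 z (br l1 l2 l3 l4 x y) = 0 := by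
  -- With `L = (l3, l4, l1, l2)` one has `gm (br x y) z = det (L, x, y, z)`, so the bracket is a
  -- ternary cross product with one slot fixed, and `gm (br x (br y z)) w` is the Gram determinant
  -- of `(L, w, x)` against `(L, y, z)`. Its cyclic sum over `x, y, z` vanishes by the symmetry of
  -- `gm` (first Bianchi identity). In coordinates this is a polynomial identity.
  ext i
  fin_cases i <;> simp [br] <;> ring

end
end

section
/- For the quasi-Kähler Lie group example with structure constants λ₁,λ₂,λ₃,λ₄, the square norm of ∇J computed with respect to g equals 4(λ₁² + λ₂² − λ₃² − λ₄²); hence (G,J,g) is isotropic Kähler (‖∇J‖ = 0) if and only if λ₁² + λ₂² − λ₃² − λ₄² = 0. -/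
/-!
The matrix of `g` is `diag(1, 1, -1, -1)`, which is its own inverse, so the fourfold contraction
collapses to the signed double sum `∑ i k, εᵢ εₖ g((∇_{eᵢ}J)e_k, (∇_{eᵢ}J)e_k)`. Evaluating the
sixteen vectors `(∇_{eᵢ}J)e_k` from the structure constants turns this into a polynomial identity
in `λ₁, …, λ₄`.
-/

noncomputable section

/-- The signs `εᵢ = g(eᵢ, eᵢ)` of the Norden metric. -/
def eps : Fin 4 → ℝ := ![1, 1, -1, -1]

lemma G_eq_diagonal : G = Matrix.diagonal eps := by
  ext i j
  fin_cases i <;> fin_cases j <;> simp [G, gm, e, eps]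

lemma G_inv_eq_diagonal : G⁻¹ = Matrix.diagonal eps := by
  apply Matrix.inv_eq_right_inv
  rw [G_eq_diagonal, Matrix.diagonal_mul_diagonal, ← Matrix.diagonal_one]
  congr 1
  ext i
  fin_cases i <;> simp [eps]

/-- Raising indices with `G⁻¹` leaves only the diagonal terms of the contraction. -/
lemma contraction_eq (n : Fin 4 → Fin 4 → (Fin 4 → ℝ)) :
    (∑ i, ∑ j, ∑ k, ∑ m, G⁻¹ i j * G⁻¹ k m * gm (n i k) (n j m))
      = ∑ i, ∑ k, eps i * eps k * gm (n i k) (n i k) := by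
  simp [G_inv_eq_diagonal, Matrix.diagonal_apply]

/-- The square norm `‖∇J‖ = gⁱʲ gᵏˡ g((∇_{eᵢ}J)e_k, (∇_{eⱼ}J)e_l)` equals
`4(λ₁² + λ₂² − λ₃² − λ₄²)`; hence `(G,J,g)` is isotropic Kähler (`‖∇J‖ = 0`)
iff `λ₁² + λ₂² − λ₃² − λ₄² = 0`. -/
theorem stmt_12 (l1 l2 l3 l4 : ℝ)
    (nJ : Fin 4 → Fin 4 → (Fin 4 → ℝ))
    -- `nJ i k = (∇_{eᵢ} J) e_k`
    (hnJ : ∀ i k, nJ i k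
      = nab l1 l2 l3 l4 (e i) (Jm (e k)) - Jm (nab l1 l2 l3 l4 (e i) (e k))) :
    (∑ i, ∑ j, ∑ k, ∑ m, G⁻¹ i j * G⁻¹ k m * gm (nJ i k) (nJ j m))
        = 4 * (l1^2 + l2^2 - l3^2 - l4^2) ∧
    ((∑ i, ∑ j, ∑ k, ∑ m, G⁻¹ i j * G⁻¹ k m * gm (nJ i k) (nJ j m)) = 0 ↔
      l1^2 + l2^2 - l3^2 - l4^2 = 0) := by
  have key : (∑ i, ∑ j, ∑ k, ∑ m, G⁻¹ i j * G⁻¹ k m * gm (nJ i k) (nJ j m))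
      = 4 * (l1^2 + l2^2 - l3^2 - l4^2) := by
    rw [contraction_eq]
    simp [Fin.sum_univ_four, hnJ, eps, gm, nab, br, Jm, e, Pi.single_apply]
    ring
  refine ⟨key, ?_⟩
  rw [key]
  simp

end
end
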